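/- Fix an integer r ≥ 1 and let K_r = ℚ(x_0, …, x_{r-1}, y_0, …, y_{r-1}) be the field of rational functions in 2r indeterminates over ℚ; adopt the convention x_j = 1 for j < 0 or j ≥ r. For 0 ≤ i ≤ r−1 and 0 ≤ n ≤ r−i define X_{i,n} = Σ_{k=0}^{n} (∏_{j=i}^{i+k-1} y_j) · x_{i-1} x_{i+n} / (x_{i+k-1} x_{i+k}) ∈ K_r (empty products equal 1); in particular X_{i,0} = 1 and X_{i,1} = (x_{i+1} + y_i x_{i-1})/x_i. Then for every 0 ≤ i ≤ r−1 and 1 ≤ n ≤ r−i, X_{i,n} equals the determinant of the n×n tridiagonal matrix whose diagonal entries, from top-left to bottom-right, are X_{i+n-1,1}, X_{i+n-2,1}, …, X_{i,1}, whose superdiagonal entries are all 1, and whose subdiagonal entries, from top to bottom, are y_{i+n-1}, y_{i+n-2}, …, y_{i+1}. -/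

import Mathlib

/-- The `n × n` tridiagonal matrix whose diagonal entries, from top-left to bottom-right,
are `x (i+n-1), x (i+n-2), …, x i`, whose superdiagonal entries are all `1`, and whose
subdiagonal entries, from top to bottom, are `q (i+n-1), …, q (i+1)`. -/
def triMat {R : Type*} [CommRing R] (q x : ℤ → R) (i : ℤ) (n : ℕ) :
    Matrix (Fin n) (Fin n) R :=
  Matrix.of fun j k =>
    if (j : ℕ) = (k : ℕ) then x (i + (n : ℤ) - 1 - (j : ℕ))
    else if (j : ℕ) + 1 = (k : ℕ) then 1
    else if (k : ℕ) + 1 = (j : ℕ) then q (i + (n : ℤ) - 1 - (k : ℕ))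
    else 0

/-- The tridiagonal determinant `D_{i,n}(q,x)`; by convention `D_{i,0}(q,x) = 1`. -/
def triDet {R : Type*} [CommRing R] (q x : ℤ → R) (i : ℤ) (n : ℕ) : R :=
  (triMat q x i n).det

/-- The field `K_r = ℚ(x_0, …, x_{r-1}, y_0, …, y_{r-1})` of rational functions in `2r`
indeterminates over `ℚ`. -/
abbrev Kr (r : ℕ) := FractionRing (MvPolynomial (Fin r ⊕ Fin r) ℚ)

/-- The element `x_j` of `K_r`, with the convention `x_j = 1` for `j < 0` or `j ≥ r`. -/
noncomputable def xcl (r : ℕ) (j : ℤ) : Kr r :=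
  if h : 0 ≤ j ∧ j < (r : ℤ) then
    algebraMap (MvPolynomial (Fin r ⊕ Fin r) ℚ) (Kr r)
      (MvPolynomial.X (Sum.inl ⟨j.toNat, by omega⟩))
  else 1

/-- The element `y_j` of `K_r` (by convention `1` out of range, which is never used). -/
noncomputable def ycl (r : ℕ) (j : ℤ) : Kr r :=
  if h : 0 ≤ j ∧ j < (r : ℤ) then
    algebraMap (MvPolynomial (Fin r ⊕ Fin r) ℚ) (Kr r)
      (MvPolynomial.X (Sum.inr ⟨j.toNat, by omega⟩))
  else 1

/-- The Laurent expansion `X_{i,n} = Σ_{k=0}^{n} (∏_{j=i}^{i+k-1} y_j) ·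
x_{i-1} x_{i+n} / (x_{i+k-1} x_{i+k})` of the cluster character with principal
coefficients of the indecomposable module `S_i^{(n)}`. -/
noncomputable def Xcl (r : ℕ) (i : ℤ) (n : ℕ) : Kr r :=
  ∑ k ∈ Finset.range (n + 1),
    (∏ j ∈ Finset.range k, ycl r (i + (j : ℕ))) *
      xcl r (i - 1) * xcl r (i + (n : ℕ)) /
        (xcl r (i + (k : ℕ) - 1) * xcl r (i + (k : ℕ)))

/-!
Fix `i` and let `X n` be the Laurent sum with parameters `i` and `n`. Passing from `X n` to
`X (n + 1)` rescales every summand by `x (i + n + 1) / x (i + n)` and adds one more, so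
`x (i + n) * X (n + 1) = x (i + n + 1) * X n + y i ⋯ y (i + n) * x (i - 1)`. Two consecutive such
relations have inhomogeneous terms in ratio `y (i + n + 1)`; eliminating these terms leaves the
three-term recurrence that the tridiagonal determinant satisfies by expansion along its border.
-/

section Determinant

variable {R : Type*} [CommRing R]

theorem det_succ_of_column_zero_tail_eq_zero {n : ℕ} (M : Matrix (Fin (n + 1)) (Fin (n + 1)) R)
    (hcol : ∀ j : Fin n, M j.succ 0 = 0) :
    M.det = M 0 0 * (M.submatrix Fin.succ Fin.succ).det := by
  simp [Matrix.det_succ_column_zero, Fin.sum_univ_succ, hcol]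

theorem det_succ_succ_of_border_tail_eq_zero {n : ℕ} (M : Matrix (Fin (n + 2)) (Fin (n + 2)) R)
    (hrow : ∀ k : Fin n, M 0 k.succ.succ = 0) (hcol : ∀ j : Fin n, M j.succ.succ 0 = 0) :
    M.det = M 0 0 * (M.submatrix Fin.succ Fin.succ).det -
      M 0 1 * M 1 0 *
        ((M.submatrix Fin.succ Fin.succ).submatrix Fin.succ Fin.succ).det := by
  have hminor : (M.submatrix Fin.succ (Fin.succAbove 1)).det =
      M 1 0 * ((M.submatrix Fin.succ Fin.succ).submatrix Fin.succ Fin.succ).det := by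
    rw [det_succ_of_column_zero_tail_eq_zero _ (by simpa using hcol)]
    simp [Matrix.submatrix_submatrix, Function.comp_def]
  rw [Matrix.det_succ_row_zero, Fin.sum_univ_succ, Fin.sum_univ_succ]
  simp only [hrow, hminor, Fin.succ_zero_eq_one, Fin.succAbove_zero, Fin.val_zero, Fin.val_one,
    mul_zero, zero_mul, Finset.sum_const_zero]
  ring

theorem triMat_submatrix_succ (q x : ℤ → R) (i : ℤ) (n : ℕ) :
    (triMat q x i (n + 1)).submatrix Fin.succ Fin.succ = triMat q x i n := by
  have shift (m : ℕ) : i + ((n + 1 : ℕ) : ℤ) - 1 - ((m + 1 : ℕ) : ℤ) = i + n - 1 - m := by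
    push_cast; ring
  ext j k
  simp only [triMat, Matrix.submatrix_apply, Matrix.of_apply, Fin.val_succ, shift,
    Nat.add_right_cancel_iff]

theorem triDet_zero (q x : ℤ → R) (i : ℤ) : triDet q x i 0 = 1 :=
  Matrix.det_fin_zero

theorem triDet_one (q x : ℤ → R) (i : ℤ) : triDet q x i 1 = x i := by
  simp [triDet, triMat]

theorem triDet_add_two (q x : ℤ → R) (i : ℤ) (n : ℕ) :
    triDet q x i (n + 2) =
      x (i + n + 1) * triDet q x i (n + 1) - q (i + n + 1) * triDet q x i n := by
  have top : i + ((n : ℤ) + 2) - 1 = i + n + 1 := by ring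
  have h00 : triMat q x i (n + 2) 0 0 = x (i + n + 1) := by simp [triMat, top]
  have h01 : triMat q x i (n + 2) 0 1 = 1 := by simp [triMat]
  have h10 : triMat q x i (n + 2) 1 0 = q (i + n + 1) := by simp [triMat, top]
  have hrow (k : Fin n) : triMat q x i (n + 2) 0 k.succ.succ = 0 := by simp [triMat]
  have hcol (j : Fin n) : triMat q x i (n + 2) j.succ.succ 0 = 0 := by simp [triMat]
  rw [triDet, det_succ_succ_of_border_tail_eq_zero _ hrow hcol, h00, h01, h10, one_mul,
    triMat_submatrix_succ, triMat_submatrix_succ, triDet, triDet]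

end Determinant

section ClusterCharacter

variable {K : Type*} [Field K]

/-- The Laurent expansion of the cluster character with principal coefficients of the
indecomposable module with socle `S_i` and length `n`, evaluated at arbitrary families `x` (cluster
variables) and `y` (coefficients) of elements of a field; `Xcl` is its value at the generators of
`Kr r`. Meaningful when no `x j` vanishes, as division is total. -/
def clusterCharacter (x y : ℤ → K) (i : ℤ) (n : ℕ) : K :=
  ∑ k ∈ Finset.range (n + 1),
    (∏ j ∈ Finset.range k, y (i + j)) * x (i - 1) * x (i + n) / (x (i + k - 1) * x (i + k))

theorem clusterCharacter_zero {x : ℤ → K} (hx : ∀ j, x j ≠ 0) (y : ℤ → K) (i : ℤ) :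
    clusterCharacter x y i 0 = 1 := by
  simp [clusterCharacter, hx]

theorem mul_clusterCharacter_succ {x : ℤ → K} (hx : ∀ j, x j ≠ 0) (y : ℤ → K) (i : ℤ) (n : ℕ) :
    x (i + n) * clusterCharacter x y i (n + 1) =
      x (i + n + 1) * clusterCharacter x y i n +
        (∏ j ∈ Finset.range (n + 1), y (i + j)) * x (i - 1) := by
  have cast_succ : i + ((n + 1 : ℕ) : ℤ) = i + n + 1 := by push_cast; ring
  rw [clusterCharacter, Finset.sum_range_succ, mul_add, cast_succ, add_sub_cancel_right]
  congr 1
  · rw [clusterCharacter, Finset.mul_sum, Finset.mul_sum]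
    exact Finset.sum_congr rfl fun k _ => by ring
  · field_simp [hx]

theorem clusterCharacter_one {x : ℤ → K} (hx : ∀ j, x j ≠ 0) (y : ℤ → K) (i : ℤ) :
    clusterCharacter x y i 1 = (x (i + 1) + y i * x (i - 1)) / x i := by
  rw [eq_div_iff (hx i), mul_comm]
  simpa [clusterCharacter_zero hx] using mul_clusterCharacter_succ hx y i 0

theorem clusterCharacter_add_two {x : ℤ → K} (hx : ∀ j, x j ≠ 0) (y : ℤ → K) (i : ℤ) (n : ℕ) :
    clusterCharacter x y i (n + 2) =
      clusterCharacter x y (i + n + 1) 1 * clusterCharacter x y i (n + 1) -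
        y (i + n + 1) * clusterCharacter x y i n := by
  have lower := mul_clusterCharacter_succ hx y i n
  have upper := mul_clusterCharacter_succ hx y i (n + 1)
  rw [Finset.prod_range_succ, Nat.cast_succ, ← add_assoc] at upper
  rw [clusterCharacter_one hx, add_sub_cancel_right]
  field_simp [hx]
  linear_combination upper - y (i + n + 1) * lower

theorem cluster_character_typeA_det_general {x : ℤ → K} (hx : ∀ j, x j ≠ 0) (y : ℤ → K) (i : ℤ)
    (n : ℕ) :
    clusterCharacter x y i n = triDet y (fun j => clusterCharacter x y j 1) i n := by
  induction n using Nat.twoStepInduction with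
  | zero => rw [clusterCharacter_zero hx, triDet_zero]
  | one => rw [triDet_one]
  | more n ih ih_succ => rw [clusterCharacter_add_two hx, triDet_add_two, ih, ih_succ]

end ClusterCharacter

theorem xcl_ne_zero (r : ℕ) (j : ℤ) : xcl r j ≠ 0 := by
  unfold xcl
  split_ifs
  · rw [Ne, FaithfulSMul.algebraMap_eq_zero_iff]
    exact MvPolynomial.X_ne_zero _
  · exact one_ne_zero

/-- Theorem 3: the cluster character `X_{i,n} = X^{A,y}_{S_i^{(n)}}` equals the `n × n`
tridiagonal determinant with diagonal `X_{i+n-1,1}, …, X_{i,1}`, superdiagonal `1` and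
subdiagonal `y_{i+n-1}, …, y_{i+1}`. -/
theorem cluster_character_typeA_det (r : ℕ) (hr : 1 ≤ r) (i : ℤ) (n : ℕ)
    (hi0 : 0 ≤ i) (hir : i ≤ (r : ℤ) - 1) (hn : 1 ≤ n) (hnr : (n : ℤ) ≤ (r : ℤ) - i) :
    Xcl r i n = triDet (ycl r) (fun j => Xcl r j 1) i n :=
  cluster_character_typeA_det_general (xcl_ne_zero r) (ycl r) i n
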